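/- For all integers d, k with 1 ≤ k ≤ d, the growth constant of closed (d,k)-self-avoiding manifolds satisfies the upper bound limsup_{n→∞} (c^SAM_{(d,k),n}(0))^{1/n} ≤ 2(d−k)+1. -/

import Mathlib

open Filter

/-- A `k`-face of the hypercubic lattice `ℤ^d`: an orientation set `S ⊆ {1,…,d}`
together with a base vertex `v ∈ ℤ^d`. -/
abbrev Face (d : ℕ) := Finset (Fin d) × (Fin d → ℤ)

/-- The boundary `(k-1)`-edges of a `k`-face `(S, v)`: the `(k-1)`-faces
`(S \ {i}, v)` and `(S \ {i}, v + e_i)` for `i ∈ S`. -/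
def faceEdges {d : ℕ} (f : Face d) : Finset (Face d) :=
  f.1.biUnion fun i =>
    {(f.1.erase i, f.2), (f.1.erase i, f.2 + Pi.single i 1)}

/-- Two faces are adjacent if they are distinct and share a common boundary edge. -/
def FaceAdj {d : ℕ} (f g : Face d) : Prop :=
  f ≠ g ∧ ∃ e, e ∈ faceEdges f ∧ e ∈ faceEdges g

/-- A set of faces is connected with respect to adjacency. -/
def ConnectedFaces {d : ℕ} (M : Finset (Face d)) : Prop :=
  ∀ f ∈ M, ∀ g ∈ M, Relation.ReflTransGen (fun a b => a ∈ M ∧ b ∈ M ∧ FaceAdj a b) f g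

/-- A `(d,k)`-self-avoiding manifold of `k`-area `n`: a connected set of `n` `k`-faces
such that every `(k-1)`-edge bounds at most two of its `k`-faces. -/
def IsSAM (d k n : ℕ) (M : Finset (Face d)) : Prop :=
  M.card = n ∧ (∀ f ∈ M, f.1.card = k) ∧ ConnectedFaces M ∧
    ∀ e : Face d, (M.filter fun f => e ∈ faceEdges f).card ≤ 2

/-- A closed `(d,k)`-self-avoiding manifold: every boundary edge of every face
is shared by exactly two faces. -/
def IsClosedSAM (d k n : ℕ) (M : Finset (Face d)) : Prop :=
  IsSAM d k n M ∧ ∀ f ∈ M, ∀ e ∈ faceEdges f,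
    (M.filter fun g => e ∈ faceEdges g).card = 2

/-- A `(d,k)`-fixed polyominoid of `k`-area `n`: a connected set of `n` `k`-faces. -/
def IsXD (d k n : ℕ) (M : Finset (Face d)) : Prop :=
  M.card = n ∧ (∀ f ∈ M, f.1.card = k) ∧ ConnectedFaces M

/-- Translation of a face by a lattice vector. -/
def translateFace {d : ℕ} (t : Fin d → ℤ) (f : Face d) : Face d := (f.1, f.2 + t)

/-- Two sets of faces are translation-equivalent. -/
def TransEquiv {d : ℕ} (A B : Finset (Face d)) : Prop :=
  ∃ t : Fin d → ℤ, A.image (translateFace t) = B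

/-- The number of `(d,k)`-self-avoiding manifolds of `k`-area `n`, up to translation. -/
noncomputable def samCount (d k n : ℕ) : ℕ :=
  Nat.card (Quot fun A B : {M : Finset (Face d) // IsSAM d k n M} =>
    TransEquiv A.val B.val)

/-- The number of closed `(d,k)`-self-avoiding manifolds of `k`-area `n`, up to
translation. -/
noncomputable def closedSamCount (d k n : ℕ) : ℕ :=
  Nat.card (Quot fun A B : {M : Finset (Face d) // IsClosedSAM d k n M} =>
    TransEquiv A.val B.val)

/-- The number of `(d,k)`-fixed polyominoids of `k`-area `n`, up to translation. -/
noncomputable def xdCount (d k n : ℕ) : ℕ :=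
  Nat.card (Quot fun A B : {M : Finset (Face d) // IsXD d k n M} =>
    TransEquiv A.val B.val)

/-! Grow a closed manifold `M` face by face from a face based at the origin. As long as the current
part `A` of `M` is proper, connectedness gives a boundary edge `e` of a face `f ∈ A` that lies in
fewer than two faces of `A`, and `e` can be chosen depending on `A` only. Since `M` is closed, it
contains a further face through `e`, which is one of the at most
`2 (d - (k - 1)) - 1 = 2 (d - k) + 1` faces through `e` other than `f`. So there are at most
`(d.choose k) * (2 (d - k) + 1) ^ (n - 1)` closed manifolds of area `n ≥ 1` up to translation. -/

section Counting

variable {α ι : Type*}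

lemma encard_biUnion_le_card_mul {t : Finset ι} {s : ι → Set α} {b : ℕ∞}
    (h : ∀ i ∈ t, (s i).encard ≤ b) : (⋃ i ∈ t, s i).encard ≤ t.card * b :=
  (t.set_encard_biUnion_le s).trans <| by simpa using Finset.sum_le_card_nsmul t _ b h

/-- Each node `A` of the search tree has the children `insert g A` with `g` among at most `b`
candidates, at least one of which lies in each given larger member of the family. -/
lemma encard_supersets_le_pow {P : Set (Finset α)} {N b : ℕ}
    (hcard : ∀ M ∈ P, M.card = N)
    (hstep : ∀ A : Finset α, A.Nonempty → ∀ M₀ ∈ P, A ⊂ M₀ →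
      ∃ C : Finset α, C.card ≤ b ∧ ∀ M ∈ P, A ⊆ M → ∃ g ∈ C, g ∈ M ∧ g ∉ A)
    {A : Finset α} (hA : A.Nonempty) {j : ℕ} (hj : A.card + j = N) :
    {M ∈ P | A ⊆ M}.encard ≤ b ^ j := by
  classical
  induction j generalizing A with
  | zero =>
    rw [pow_zero, Set.encard_le_one_iff]
    rintro M₁ M₂ ⟨hM₁, hAM₁⟩ ⟨hM₂, hAM₂⟩
    have eq_A {M : Finset α} (hM : M ∈ P) (hAM : A ⊆ M) : A = M :=
      Finset.eq_of_subset_of_card_le hAM (by rw [hcard M hM, ← hj, add_zero])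
    rw [← eq_A hM₁ hAM₁, ← eq_A hM₂ hAM₂]
  | succ j ih =>
    obtain hempty | ⟨M₀, hM₀, hAM₀⟩ := {M ∈ P | A ⊆ M}.eq_empty_or_nonempty
    · simp [hempty]
    have hssub : A ⊂ M₀ := hAM₀.ssubset_of_ne (by rintro rfl; have := hcard A hM₀; lia)
    obtain ⟨C, hC, hmeet⟩ := hstep A hA M₀ hM₀ hssub
    have hcover : {M ∈ P | A ⊆ M} ⊆ ⋃ g ∈ C \ A, {M ∈ P | insert g A ⊆ M} := by
      rintro M ⟨hM, hAM⟩
      obtain ⟨g, hgC, hgM, hgA⟩ := hmeet M hM hAM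
      exact Set.mem_biUnion (Finset.mem_coe.2 (Finset.mem_sdiff.2 ⟨hgC, hgA⟩))
        ⟨hM, Finset.insert_subset hgM hAM⟩
    have hchild : ∀ g ∈ C \ A, {M ∈ P | insert g A ⊆ M}.encard ≤ (b : ℕ∞) ^ j := fun g hg ↦
      ih (A.insert_nonempty g) <| by
        rw [Finset.card_insert_of_notMem (Finset.mem_sdiff.1 hg).2]; lia
    calc {M ∈ P | A ⊆ M}.encard
        ≤ (C \ A).card * (b : ℕ∞) ^ j :=
          (Set.encard_le_encard hcover).trans (encard_biUnion_le_card_mul hchild)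
      _ ≤ b * (b : ℕ∞) ^ j := by
          gcongr
          exact (Finset.card_le_card Finset.sdiff_subset).trans hC
      _ = b ^ (j + 1) := (pow_succ' _ _).symm

end Counting

section GrowthRate

lemma limsup_rpow_one_div_le_of_le_const_mul_pow {u : ℕ → ℝ} {C B : ℝ} (hu : ∀ n, 0 ≤ u n)
    (hC : 0 < C) (hB : 0 ≤ B) (h : ∀ᶠ n in atTop, u n ≤ C * B ^ n) :
    limsup (fun n : ℕ ↦ u n ^ (1 / (n : ℝ))) atTop ≤ B := by
  have hroot : ∀ᶠ n : ℕ in atTop, u n ^ (1 / (n : ℝ)) ≤ C ^ (1 / (n : ℝ)) * B := by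
    filter_upwards [h, eventually_ne_atTop 0] with n hn hn0
    calc u n ^ (1 / (n : ℝ))
        ≤ (C * B ^ n) ^ (1 / (n : ℝ)) := Real.rpow_le_rpow (hu n) hn (by positivity)
      _ = C ^ (1 / (n : ℝ)) * B := by
          rw [Real.mul_rpow hC.le (by positivity), one_div, Real.pow_rpow_inv_natCast hB hn0]
  have hlim : Tendsto (fun n : ℕ ↦ C ^ (1 / (n : ℝ)) * B) atTop (nhds B) := by
    simpa using ((tendsto_const_nhds (x := C)).rpow tendsto_one_div_atTop_nhds_zero_nat
      (.inl hC.ne')).mul_const B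
  calc limsup (fun n : ℕ ↦ u n ^ (1 / (n : ℝ))) atTop
      ≤ limsup (fun n : ℕ ↦ C ^ (1 / (n : ℝ)) * B) atTop :=
        limsup_le_limsup hroot
          (isCoboundedUnder_le_of_le atTop (x := 0) fun n ↦ Real.rpow_nonneg (hu n) _)
          hlim.isBoundedUnder_le
    _ = B := hlim.limsup_eq

end GrowthRate

section Cofaces

variable {d : ℕ} {e f g : Face d}

lemma mem_faceEdges : e ∈ faceEdges f ↔
    ∃ i ∈ f.1, e = (f.1.erase i, f.2) ∨ e = (f.1.erase i, f.2 + Pi.single i 1) := by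
  simp only [faceEdges, Finset.mem_biUnion, Finset.mem_insert, Finset.mem_singleton]

lemma card_add_one_of_mem_faceEdges (h : e ∈ faceEdges f) : e.1.card + 1 = f.1.card := by
  obtain ⟨i, hi, rfl | rfl⟩ := mem_faceEdges.1 h <;> exact Finset.card_erase_add_one hi

/-- The cofaces of `e`: the faces of one dimension more that have `e` as a boundary edge, obtained
by adding a direction `i` to the orientation of `e` and extending forwards or backwards along it. -/
def cofaces (e : Face d) : Finset (Face d) :=
  e.1ᶜ.biUnion fun i ↦ {(insert i e.1, e.2), (insert i e.1, e.2 - Pi.single i 1)}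

lemma mem_cofaces_of_mem_faceEdges (h : e ∈ faceEdges f) : f ∈ cofaces e := by
  obtain ⟨S, v⟩ := f
  simp only [cofaces, Finset.mem_biUnion, Finset.mem_compl, Finset.mem_insert,
    Finset.mem_singleton]
  obtain ⟨i, hi, rfl | rfl⟩ := mem_faceEdges.1 h
  · exact ⟨i, S.notMem_erase i, .inl (by rw [Finset.insert_erase hi])⟩
  · exact ⟨i, S.notMem_erase i, .inr (by rw [Finset.insert_erase hi, add_sub_cancel_right])⟩

lemma card_cofaces_le (e : Face d) : (cofaces e).card ≤ 2 * (d - e.1.card) :=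
  calc (cofaces e).card
      ≤ e.1ᶜ.card * 2 := Finset.card_biUnion_le_card_mul _ _ 2 fun _ _ ↦ Finset.card_le_two
    _ = 2 * (d - e.1.card) := by rw [Finset.card_compl, Fintype.card_fin, mul_comm]

lemma card_cofaces_erase_le (h : e ∈ faceEdges f) :
    ((cofaces e).erase f).card ≤ 2 * (d - f.1.card) + 1 := by
  have hle := card_cofaces_le e
  have hcard := card_add_one_of_mem_faceEdges h
  rw [Finset.card_erase_of_mem (mem_cofaces_of_mem_faceEdges h)]
  lia

end Cofaces

section Growing

variable {d k n : ℕ} {A M : Finset (Face d)} {e f g : Face d}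

lemma ConnectedFaces.exists_shared_edge_of_ssubset (hM : ConnectedFaces M) (hA : A.Nonempty)
    (hAM : A ⊂ M) : ∃ f ∈ A, ∃ g ∈ M, g ∉ A ∧ ∃ e, e ∈ faceEdges f ∧ e ∈ faceEdges g := by
  obtain ⟨f₀, hf₀⟩ := hA
  obtain ⟨g₀, hg₀M, hg₀A⟩ := Finset.exists_of_ssubset hAM
  have hpath := hM f₀ (hAM.subset hf₀) g₀ hg₀M
  contrapose! hg₀A with hclosed
  induction hpath with
  | refl => exact hf₀
  | @tail a b _ hab ha =>
    obtain ⟨haM, hbM, -, e, hea, heb⟩ := hab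
    by_contra hbA
    exact hclosed a (ha haM) b hbM hbA e hea heb

lemma IsClosedSAM.card_filter_lt_two (hM : IsClosedSAM d k n M) (hAM : A ⊆ M) (hgM : g ∈ M)
    (hgA : g ∉ A) (he : e ∈ faceEdges g) : (A.filter fun f ↦ e ∈ faceEdges f).card < 2 := by
  rw [← hM.2 g hgM e he]
  refine Finset.card_lt_card (Finset.ssubset_iff_of_subset (Finset.filter_subset_filter _ hAM)
    |>.2 ⟨g, ?_, ?_⟩)
  · exact Finset.mem_filter.2 ⟨hgM, he⟩
  · exact fun h ↦ hgA (Finset.mem_filter.1 h).1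

lemma IsClosedSAM.exists_mem_cofaces_erase (hM : IsClosedSAM d k n M) (hAM : A ⊆ M) (hf : f ∈ A)
    (he : e ∈ faceEdges f) (hlt : (A.filter fun g ↦ e ∈ faceEdges g).card < 2) :
    ∃ g ∈ (cofaces e).erase f, g ∈ M ∧ g ∉ A := by
  rw [← hM.2 f (hAM hf) e he] at hlt
  obtain ⟨g, hgM, hgA⟩ := Finset.exists_mem_notMem_of_card_lt_card hlt
  obtain ⟨hgM, heg⟩ := Finset.mem_filter.1 hgM
  replace hgA : g ∉ A := fun h ↦ hgA (Finset.mem_filter.2 ⟨h, heg⟩)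
  have hgf : g ≠ f := by rintro rfl; exact hgA hf
  exact ⟨g, Finset.mem_erase.2 ⟨hgf, mem_cofaces_of_mem_faceEdges heg⟩, hgM, hgA⟩

lemma IsClosedSAM.exists_finset_meeting_extensions (hM : IsClosedSAM d k n M) (hA : A.Nonempty)
    (hAM : A ⊂ M) : ∃ C : Finset (Face d), C.card ≤ 2 * (d - k) + 1 ∧
      ∀ M', IsClosedSAM d k n M' → A ⊆ M' → ∃ g ∈ C, g ∈ M' ∧ g ∉ A := by
  obtain ⟨f, hf, g, hgM, hgA, e, hef, heg⟩ := hM.1.2.2.1.exists_shared_edge_of_ssubset hA hAM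
  have hlt := hM.card_filter_lt_two hAM.subset hgM hgA heg
  refine ⟨(cofaces e).erase f, ?_, fun M' hM' hAM' ↦ hM'.exists_mem_cofaces_erase hAM' hf hef hlt⟩
  rw [← hM.1.2.1 f (hAM.subset hf)]
  exact card_cofaces_erase_le hef

lemma encard_isClosedSAM_mem_le (d k n : ℕ) (f : Face d) :
    {M | IsClosedSAM d k (n + 1) M ∧ f ∈ M}.encard ≤ (2 * (d - k) + 1 : ℕ) ^ n := by
  have h := encard_supersets_le_pow (P := {M | IsClosedSAM d k (n + 1) M}) (fun M hM ↦ hM.1.1)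
    (fun A hA M hM hAM ↦ hM.exists_finset_meeting_extensions hA hAM) (Finset.singleton_nonempty f)
    (j := n) (by rw [Finset.card_singleton, add_comm])
  simpa using h

end Growing

section Translation

variable {d k n : ℕ} {M : Finset (Face d)} {e f g : Face d}

lemma translateFace_injective (t : Fin d → ℤ) :
    Function.Injective (translateFace t : Face d → Face d) :=
  Function.injective_id.prodMap (add_left_injective t)

lemma translateFace_surjective (t : Fin d → ℤ) :
    Function.Surjective (translateFace t : Face d → Face d) :=
  Function.surjective_id.prodMap (add_right_surjective t)

lemma faceEdges_translateFace (t : Fin d → ℤ) (f : Face d) :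
    faceEdges (translateFace t f) = (faceEdges f).image (translateFace t) := by
  simp only [faceEdges, translateFace, Finset.biUnion_image, Finset.image_insert,
    Finset.image_singleton, add_right_comm]

lemma translateFace_mem_faceEdges_iff (t : Fin d → ℤ) :
    translateFace t e ∈ faceEdges (translateFace t f) ↔ e ∈ faceEdges f := by
  rw [faceEdges_translateFace, (translateFace_injective t).mem_finset_image]

lemma card_filter_image_translateFace (t : Fin d → ℤ) (M : Finset (Face d)) (e : Face d) :
    ((M.image (translateFace t)).filter fun f ↦ translateFace t e ∈ faceEdges f).card =
      (M.filter fun f ↦ e ∈ faceEdges f).card := by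
  simp only [Finset.filter_image, translateFace_mem_faceEdges_iff,
    Finset.card_image_of_injective _ (translateFace_injective t)]

lemma FaceAdj.translateFace (h : FaceAdj f g) (t : Fin d → ℤ) :
    FaceAdj (translateFace t f) (translateFace t g) := by
  obtain ⟨hne, e, hef, heg⟩ := h
  exact ⟨(translateFace_injective t).ne hne, _, (translateFace_mem_faceEdges_iff t).2 hef,
    (translateFace_mem_faceEdges_iff t).2 heg⟩

lemma ConnectedFaces.image_translateFace (hM : ConnectedFaces M) (t : Fin d → ℤ) :
    ConnectedFaces (M.image (translateFace t)) := by
  simp only [ConnectedFaces, Finset.forall_mem_image]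
  refine fun f hf g hg ↦ (hM f hf g hg).lift (translateFace t) ?_
  rintro a b ⟨ha, hb, hab⟩
  exact ⟨Finset.mem_image_of_mem _ ha, Finset.mem_image_of_mem _ hb, hab.translateFace t⟩

lemma IsSAM.image_translateFace (hM : IsSAM d k n M) (t : Fin d → ℤ) :
    IsSAM d k n (M.image (translateFace t)) := by
  obtain ⟨hcard, hdim, hconn, hle⟩ := hM
  refine ⟨?_, Finset.forall_mem_image.2 hdim, hconn.image_translateFace t, ?_⟩
  · rw [Finset.card_image_of_injective _ (translateFace_injective t), hcard]
  · exact (translateFace_surjective t).forall.2 fun e ↦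
      (card_filter_image_translateFace t M e).trans_le (hle e)

lemma IsClosedSAM.image_translateFace (hM : IsClosedSAM d k n M) (t : Fin d → ℤ) :
    IsClosedSAM d k n (M.image (translateFace t)) := by
  refine ⟨hM.1.image_translateFace t, Finset.forall_mem_image.2 fun f hf ↦ ?_⟩
  rw [faceEdges_translateFace, Finset.forall_mem_image]
  exact fun e he ↦ (card_filter_image_translateFace t M e).trans (hM.2 f hf e he)

end Translation

/-- The closed `(d,k)`-self-avoiding manifolds of `k`-area `n` having a face based at the origin.
Every nonempty closed manifold has such a translate. -/
def rootedClosedSAMs (d k n : ℕ) : Set (Finset (Face d)) :=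
  {M | IsClosedSAM d k n M ∧ ∃ S, (S, 0) ∈ M}

lemma encard_rootedClosedSAMs_le (d k n : ℕ) :
    (rootedClosedSAMs d k (n + 1)).encard ≤ (d.choose k * (2 * (d - k) + 1) ^ n : ℕ) := by
  have hcover : rootedClosedSAMs d k (n + 1) ⊆
      ⋃ S ∈ Finset.powersetCard k (Finset.univ : Finset (Fin d)),
        {M | IsClosedSAM d k (n + 1) M ∧ (S, 0) ∈ M} := by
    rintro M ⟨hM, S, hS⟩
    exact Set.mem_biUnion (Finset.mem_coe.2 (Finset.mem_powersetCard_univ.2 (hM.1.2.1 _ hS)))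
      ⟨hM, hS⟩
  have h := (Set.encard_le_encard hcover).trans
    (encard_biUnion_le_card_mul fun S _ ↦ encard_isClosedSAM_mem_le d k n (S, 0))
  simpa [Finset.card_powersetCard] using h

lemma closedSamCount_le_encard_rootedClosedSAMs (d k n : ℕ) :
    (closedSamCount d k (n + 1) : ℕ∞) ≤ (rootedClosedSAMs d k (n + 1)).encard := by
  let toClass (M : rootedClosedSAMs d k (n + 1)) :
      Quot fun A B : {M : Finset (Face d) // IsClosedSAM d k (n + 1) M} => TransEquiv A.val B.val :=
    Quot.mk _ ⟨M.1, M.2.1⟩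
  have htoClass : Function.Surjective toClass := by
    rintro ⟨M, hM⟩
    obtain ⟨⟨S, v⟩, hf⟩ : M.Nonempty := Finset.card_pos.1 (by rw [hM.1.1]; exact n.succ_pos)
    have hroot : (S, 0) ∈ M.image (translateFace (-v)) :=
      Finset.mem_image.2 ⟨(S, v), hf, Prod.ext rfl (add_neg_cancel v)⟩
    exact ⟨⟨_, hM.image_translateFace (-v), S, hroot⟩, (Quot.sound ⟨-v, rfl⟩).symm⟩
  exact (ENat.natCast_toNat_le_self _).trans
    (ENat.card_le_card_of_injective (Function.injective_surjInv htoClass))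

lemma closedSamCount_succ_le (d k n : ℕ) :
    closedSamCount d k (n + 1) ≤ d.choose k * (2 * (d - k) + 1) ^ n := by
  exact_mod_cast (closedSamCount_le_encard_rootedClosedSAMs d k n).trans
    (encard_rootedClosedSAMs_le d k n)

theorem closedSamCount_limsup_upper_bound (d k : ℕ) (hk : 1 ≤ k) (hkd : k ≤ d) :
    limsup (fun n : ℕ => (closedSamCount d k n : ℝ) ^ (1 / (n : ℝ))) atTop ≤
      ((2 * (d - k) + 1 : ℕ) : ℝ) := by
  refine limsup_rpow_one_div_le_of_le_const_mul_pow (C := d.choose k) (fun _ ↦ Nat.cast_nonneg _)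
    (mod_cast Nat.choose_pos hkd) (Nat.cast_nonneg _) ?_
  filter_upwards [eventually_ne_atTop 0] with n hn
  obtain ⟨m, rfl⟩ := Nat.exists_eq_succ_of_ne_zero hn
  have hle : closedSamCount d k (m + 1) ≤ d.choose k * (2 * (d - k) + 1) ^ (m + 1) := by
    refine (closedSamCount_succ_le d k m).trans ?_
    gcongr <;> lia
  exact_mod_cast hle
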